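/- There exists a constant C > 0 such that for all real x with 0 < x ≤ 1, |∫_x^∞ 2e^{−t}/(t·(1 + e^{−t})) dt − (log(1/x) + log(π/2) − γ)| ≤ C·x, where γ is the Euler–Mascheroni constant. -/

import Mathlib

/-!
The integrand splits as `e^{-t} / t + remainder t`, where
`remainder t = e^{-t} (1 - e^{-t}) / (t (1 + e^{-t}))` takes values in `[0, 1]` for `t > 0`.

* The tail integral of `e^{-t} / t` is `-log x - γ + O(x)` (`abs_expIntegral_le`): integration by
  parts reduces this to `∫_0^∞ e^{-t} log t dt = deriv Γ 1 = -γ`.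
* The remainder has total integral `log (π / 2)` (`integral_remainder`): expanding
  `1 / (1 + e^{-t})` in powers of `e^{-t}` and integrating each `(e^{-nt} - e^{-(n+1)t}) / t` by
  Frullani's formula gives `log (2/1) - log (3/2) + log (4/3) - ⋯`, the logarithm of the Wallis
  product. Its integral over `(0, x)` is at most `x`.

Each part contributes an error of at most `x`, so `C = 2` works.
-/

open scoped Real
open MeasureTheory Set Filter Topology

/-- This is `deriv Γ 1 = -γ`, with the derivative taken under the integral sign. -/
lemma integral_log_mul_exp_neg :
    ∫ t in Ioi (0 : ℝ), Real.log t * Real.exp (-t) = -Real.eulerMascheroniConstant := by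
  have h1 := Complex.hasDerivAt_GammaIntegral (s := 1) (by simp)
  have h2 : HasDerivAt Complex.GammaIntegral (-(Real.eulerMascheroniConstant : ℂ)) 1 := by
    apply Complex.hasDerivAt_Gamma_one.congr_of_eventuallyEq
    have : IsOpen {s : ℂ | 0 < s.re} := Complex.continuous_re.isOpen_preimage _ isOpen_Ioi
    filter_upwards [this.mem_nhds (show (0 : ℝ) < (1 : ℂ).re by simp)] with a ha
    exact (Complex.Gamma_eq_integral ha).symm
  have h3 := h1.unique h2
  simp only [sub_self, Complex.cpow_zero, one_mul] at h3
  have h4 : ((∫ t in Ioi (0 : ℝ), Real.log t * Real.exp (-t) : ℝ) : ℂ)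
      = ((-Real.eulerMascheroniConstant : ℝ) : ℂ) := by
    rw [← integral_complex_ofReal]
    push_cast
    simpa using h3
  exact_mod_cast h4

lemma integrableOn_log_mul_exp_neg :
    IntegrableOn (fun t : ℝ => Real.log t * Real.exp (-t)) (Ioi 0) := by
  -- A non-integrable function would have integral `0`, but `γ > 1/2`.
  by_contra h
  have h1 := integral_log_mul_exp_neg
  rw [integral_undef h] at h1
  linarith [Real.one_half_lt_eulerMascheroniConstant]

lemma integrableOn_exp_neg_div {x : ℝ} (hx : 0 < x) :
    IntegrableOn (fun t : ℝ => Real.exp (-t) / t) (Ioi x) := by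
  refine Integrable.mono' ((integrableOn_exp_neg_Ioi x).div_const x)
    (Measurable.aestronglyMeasurable (by fun_prop)) ?_
  filter_upwards [ae_restrict_mem measurableSet_Ioi] with t ht
  have ht : x < t := ht
  have : 0 < t := hx.trans ht
  rw [Real.norm_eq_abs, abs_of_pos (by positivity)]
  gcongr

/-- The asymptotics of the exponential integral `E₁`. Integrating by parts against
`log t - log x`, which vanishes at `t = x`, turns `E₁(x)` into `∫_x^∞ e^{-t} (log t - log x) dt`.
The same integral over `(0, ∞)` equals `-γ - log x`, and its part over `(0, x)` lies between
`∫_0^x (log t - log x) dt = -x` and `0`. -/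
lemma abs_expIntegral_le {x : ℝ} (hx : 0 < x) :
    |(∫ t in Ioi x, Real.exp (-t) / t) - (-Real.log x - Real.eulerMascheroniConstant)| ≤ x := by
  set L : ℝ → ℝ := fun t => Real.log t * Real.exp (-t) - Real.log x * Real.exp (-t) with hL
  have hLi : IntegrableOn L (Ioi 0) :=
    integrableOn_log_mul_exp_neg.sub ((integrableOn_exp_neg_Ioi 0).const_mul _)
  have hLx : IntegrableOn L (Ioi x) := hLi.mono_set (Ioi_subset_Ioi hx.le)
  have hL0 : IntegrableOn L (Ioc 0 x) := hLi.mono_set Ioc_subset_Ioi_self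
  have hE := integrableOn_exp_neg_div hx
  have htot : ∫ t in Ioi (0 : ℝ), L t = -Real.eulerMascheroniConstant - Real.log x := by
    rw [hL, integral_sub integrableOn_log_mul_exp_neg ((integrableOn_exp_neg_Ioi 0).const_mul _),
      integral_log_mul_exp_neg, integral_const_mul, integral_exp_neg_Ioi_zero, mul_one]
  have hparts : ∫ t in Ioi x, (L t - Real.exp (-t) / t) = 0 := by
    have hd : ∀ t ∈ Ici x, HasDerivAt (fun t => -(Real.exp (-t) * (Real.log t - Real.log x)))
        (L t - Real.exp (-t) / t) t := by
      intro t ht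
      have ht0 : t ≠ 0 := (hx.trans_le ht).ne'
      have := (((hasDerivAt_neg t).exp).mul ((Real.hasDerivAt_log ht0).sub_const (Real.log x))).neg
      refine this.congr_deriv ?_
      simp only [hL]
      ring
    have hlim : Tendsto (fun t => -(Real.exp (-t) * (Real.log t - Real.log x))) atTop (𝓝 0) := by
      have h1 : Tendsto (fun t : ℝ => Real.exp (-t)) atTop (𝓝 0) :=
        Real.tendsto_exp_neg_atTop_nhds_zero
      have h2 : Tendsto (fun t : ℝ => Real.log t * Real.exp (-t)) atTop (𝓝 0) := by
        have h3 := Real.tendsto_pow_mul_exp_neg_atTop_nhds_zero 1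
        refine squeeze_zero' ?_ ?_ h3
        · filter_upwards [eventually_ge_atTop 1] with t ht
          exact mul_nonneg (Real.log_nonneg ht) (Real.exp_pos _).le
        · filter_upwards [eventually_ge_atTop 1] with t ht
          rw [pow_one]
          gcongr
          exact Real.log_le_self (by linarith)
      have := (h2.sub (h1.const_mul (Real.log x))).neg
      simp only [mul_zero, sub_zero, neg_zero] at this
      refine this.congr fun t => by ring
    rw [integral_Ioi_of_hasDerivAt_of_tendsto' hd (hLx.sub hE) hlim]
    simp
  rw [integral_sub hLx hE] at hparts
  have hsplit : ∫ t in Ioi (0 : ℝ), L t = (∫ t in Ioc 0 x, L t) + ∫ t in Ioi x, L t := by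
    rw [← Ioc_union_Ioi_eq_Ioi hx.le]
    exact setIntegral_union (Ioc_disjoint_Ioi le_rfl) measurableSet_Ioi hL0 hLx
  have hlogi : IntegrableOn (fun t => Real.log t - Real.log x) (Ioc 0 x) :=
    (intervalIntegrable_iff_integrableOn_Ioc_of_le hx.le).1
      (intervalIntegral.intervalIntegrable_log'.sub intervalIntegrable_const)
  have hneg : ∫ t in Ioc 0 x, L t ≤ 0 := by
    refine setIntegral_nonpos measurableSet_Ioc fun t ht => ?_
    have := Real.log_le_log ht.1 ht.2
    have := Real.exp_pos (-t)
    simp only [hL]; nlinarith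
  have hlow : -x ≤ ∫ t in Ioc 0 x, L t := by
    have h1 : ∫ t in Ioc 0 x, (Real.log t - Real.log x) = -x := by
      rw [← intervalIntegral.integral_of_le hx.le,
        intervalIntegral.integral_sub intervalIntegral.intervalIntegrable_log'
          intervalIntegrable_const, integral_log]
      simp
    rw [← h1]
    refine setIntegral_mono_on hlogi hL0 measurableSet_Ioc fun t ht => ?_
    have := Real.log_le_log ht.1 ht.2
    have : Real.exp (-t) ≤ 1 := Real.exp_le_one_iff.2 (by linarith [ht.1])
    simp only [hL]; nlinarith
  rw [abs_le]
  constructor <;> linarith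

/-- The integrand `2 e^{-t} / (t (1 + e^{-t}))` minus its singular part `e^{-t} / t`. It is bounded
near `0`. -/
noncomputable def remainder (t : ℝ) : ℝ :=
  Real.exp (-t) * (1 - Real.exp (-t)) / (t * (1 + Real.exp (-t)))

lemma remainder_nonneg {t : ℝ} (ht : 0 < t) : 0 ≤ remainder t := by
  have h : Real.exp (-t) ≤ 1 := Real.exp_le_one_iff.2 (by linarith)
  have := sub_nonneg.2 h
  unfold remainder; positivity

lemma remainder_le {t : ℝ} (ht : 0 < t) : remainder t ≤ Real.exp (-t) := by
  have h1 : 1 - Real.exp (-t) ≤ t := by linarith [Real.add_one_le_exp (-t)]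
  have := Real.exp_pos (-t)
  unfold remainder
  rw [div_le_iff₀ (by positivity)]
  gcongr
  nlinarith

@[fun_prop]
lemma measurable_remainder : Measurable remainder := by
  unfold remainder; fun_prop

lemma integrableOn_remainder : IntegrableOn remainder (Ioi 0) := by
  refine Integrable.mono' (integrableOn_exp_neg_Ioi 0) (by fun_prop) ?_
  filter_upwards [ae_restrict_mem measurableSet_Ioi] with t ht
  rw [Real.norm_eq_abs, abs_of_nonneg (remainder_nonneg ht)]
  exact remainder_le ht

lemma frullani_exp {a b : ℝ} (ha : 0 < a) (hab : a ≤ b) :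
    IntegrableOn (fun t : ℝ => t⁻¹ * (Real.exp (-(a * t)) - Real.exp (-(b * t)))) (Ioi 0) ∧
    ∫ t in Ioi (0 : ℝ), t⁻¹ * (Real.exp (-(a * t)) - Real.exp (-(b * t))) = Real.log (b / a) := by
  have hi : IntegrableOn
      (fun t : ℝ => t⁻¹ * (Real.exp (-(a * t)) - Real.exp (-(b * t)))) (Ioi 0) := by
    refine Integrable.mono' ((integrableOn_exp_mul_Ioi (neg_neg_of_pos ha) 0).const_mul (b - a))
      (by fun_prop) ?_
    filter_upwards [ae_restrict_mem measurableSet_Ioi] with t ht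
    have ht : 0 < t := ht
    have h1 : Real.exp (-(b * t)) ≤ Real.exp (-(a * t)) := by gcongr
    have h2 : Real.exp (-(b * t)) = Real.exp (-(a * t)) * Real.exp (-((b - a) * t)) := by
      rw [← Real.exp_add]; ring_nf
    have h3 := Real.add_one_le_exp (-((b - a) * t))
    rw [Real.norm_eq_abs, abs_of_nonneg (mul_nonneg (by positivity) (by linarith)),
      inv_mul_le_iff₀ ht, h2, neg_mul]
    nlinarith [Real.exp_pos (-(a * t))]
  refine ⟨hi, ?_⟩
  have hc : Continuous fun t : ℝ => Real.exp (-t) := by fun_prop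
  have h := Frullani.integral_Ioi_eq (f := fun t : ℝ => Real.exp (-t)) (L := 1) (R := 0)
    (hc.locallyIntegrable.locallyIntegrableOn _) ha (ha.trans_le hab)
    (by simpa using (hc.tendsto 0).mono_left nhdsWithin_le_nhds)
    Real.tendsto_exp_neg_atTop_nhds_zero (by simpa using hi)
  simpa using h

/-- Partial sums of `remainder t = ∑_{n ≥ 1} (-1)^{n-1} (e^{-nt} - e^{-(n+1)t}) / t`, with the terms
`n = 2i + 1` and `n = 2i + 2` paired to match the factors of the Wallis product. -/
lemma sum_eq_remainder {t : ℝ} (ht : 0 < t) (k : ℕ) :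
    ∑ i ∈ Finset.range k,
      (t⁻¹ * (Real.exp (-((2 * i + 1) * t)) - Real.exp (-((2 * i + 2) * t)))
        - t⁻¹ * (Real.exp (-((2 * i + 2) * t)) - Real.exp (-((2 * i + 3) * t))))
      = remainder t * (1 - Real.exp (-t) ^ (2 * k)) := by
  have e (n : ℕ) (c : ℝ) (hc : c = n) : Real.exp (-(c * t)) = Real.exp (-t) ^ n := by
    rw [← Real.exp_nat_mul, hc]; ring_nf
  have hq := Real.exp_pos (-t)
  induction k with
  | zero => simp
  | succ k ih =>
    rw [Finset.sum_range_succ, ih, e (2 * k + 1) _ (by push_cast; ring),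
      e (2 * k + 2) _ (by push_cast; ring), e (2 * k + 3) _ (by push_cast; ring)]
    unfold remainder
    field_simp
    ring

/-- The paired series integrates term by term, by Frullani's formula, to the logarithm of the
Wallis product. -/
lemma integral_remainder : ∫ t in Ioi (0 : ℝ), remainder t = Real.log (π / 2) := by
  have hdc : Tendsto (fun k : ℕ => ∫ t in Ioi (0 : ℝ), remainder t * (1 - Real.exp (-t) ^ (2 * k)))
      atTop (𝓝 (∫ t in Ioi (0 : ℝ), remainder t)) := by
    refine tendsto_integral_of_dominated_convergence remainder (fun k => by fun_prop)
      integrableOn_remainder (fun k => ?_) ?_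
    · filter_upwards [ae_restrict_mem measurableSet_Ioi] with t ht
      have ht : 0 < t := ht
      have h0 := remainder_nonneg ht
      have h1 : Real.exp (-t) ^ (2 * k) ≤ 1 :=
        pow_le_one₀ (Real.exp_pos _).le (Real.exp_le_one_iff.2 (by linarith))
      have h2 : 0 < Real.exp (-t) ^ (2 * k) := by positivity
      rw [Real.norm_eq_abs, abs_of_nonneg (mul_nonneg h0 (by linarith))]
      nlinarith
    · filter_upwards [ae_restrict_mem measurableSet_Ioi] with t ht
      have ht : 0 < t := ht
      have h1 : Tendsto (fun k : ℕ => Real.exp (-t) ^ (2 * k)) atTop (𝓝 0) := by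
        simp_rw [pow_mul]
        refine tendsto_pow_atTop_nhds_zero_of_lt_one (by positivity) ?_
        exact pow_lt_one₀ (Real.exp_pos _).le (Real.exp_lt_one_iff.2 (by linarith)) two_ne_zero
      simpa using (h1.const_sub 1).const_mul (remainder t)
  refine tendsto_nhds_unique hdc ?_
  have hW := (Real.continuousAt_log (by positivity : π / 2 ≠ 0)).tendsto.comp
    Real.tendsto_prod_pi_div_two
  refine hW.congr fun k => ?_
  have hF (i : ℕ) := frullani_exp (a := 2 * i + 1) (b := 2 * i + 2) (by positivity) (by linarith)
  have hF' (i : ℕ) := frullani_exp (a := 2 * i + 2) (b := 2 * i + 3) (by positivity) (by linarith)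
  have hint (i : ℕ) (_ : i ∈ Finset.range k) : IntegrableOn (fun t : ℝ =>
      t⁻¹ * (Real.exp (-((2 * i + 1) * t)) - Real.exp (-((2 * i + 2) * t)))
        - t⁻¹ * (Real.exp (-((2 * i + 2) * t)) - Real.exp (-((2 * i + 3) * t)))) (Ioi 0) :=
    (hF i).1.sub (hF' i).1
  rw [← setIntegral_congr_fun measurableSet_Ioi fun t ht => sum_eq_remainder ht k,
    integral_finsetSum _ hint, Function.comp_apply,
    Real.log_prod fun i _ => by positivity]
  refine Finset.sum_congr rfl fun i _ => ?_
  rw [integral_sub (hF i).1 (hF' i).1, (hF i).2, (hF' i).2,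
    Real.log_mul (by positivity) (by positivity), sub_eq_add_neg, ← Real.log_inv, inv_div]

theorem tail_integral_asymptotic :
    ∃ C > (0 : ℝ), ∀ x : ℝ, 0 < x → x ≤ 1 →
      |(∫ t in Set.Ioi x, 2 * Real.exp (-t) / (t * (1 + Real.exp (-t))))
          - (Real.log (1 / x) + Real.log (π / 2) - Real.eulerMascheroniConstant)| ≤ C * x := by
  refine ⟨2, two_pos, fun x hx _ => ?_⟩
  have hRx : IntegrableOn remainder (Ioi x) :=
    integrableOn_remainder.mono_set (Ioi_subset_Ioi hx.le)
  have hR0 : IntegrableOn remainder (Ioc 0 x) :=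
    integrableOn_remainder.mono_set Ioc_subset_Ioi_self
  have hdecomp : ∫ t in Ioi x, 2 * Real.exp (-t) / (t * (1 + Real.exp (-t)))
      = (∫ t in Ioi x, Real.exp (-t) / t) + ∫ t in Ioi x, remainder t := by
    rw [← integral_add (integrableOn_exp_neg_div hx) hRx]
    refine setIntegral_congr_fun measurableSet_Ioi fun t ht => ?_
    have : 0 < t := hx.trans ht
    have := Real.exp_pos (-t)
    simp only [remainder]
    field_simp
    ring
  have hsplit : Real.log (π / 2)
      = (∫ t in Ioc 0 x, remainder t) + ∫ t in Ioi x, remainder t := by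
    rw [← integral_remainder, ← Ioc_union_Ioi_eq_Ioi hx.le]
    exact setIntegral_union (Ioc_disjoint_Ioi le_rfl) measurableSet_Ioi hR0 hRx
  have hpos : 0 ≤ ∫ t in Ioc 0 x, remainder t :=
    setIntegral_nonneg measurableSet_Ioc fun t ht => remainder_nonneg ht.1
  have hle : ∫ t in Ioc 0 x, remainder t ≤ x := by
    have h1 : ∫ _ in Ioc 0 x, (1 : ℝ) = x := by simp [hx.le]
    refine le_of_le_of_eq ?_ h1
    refine setIntegral_mono_on hR0 (integrableOn_const (by simp)) measurableSet_Ioc fun t ht => ?_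
    exact (remainder_le ht.1).trans (Real.exp_le_one_iff.2 (by linarith [ht.1]))
  have hE := abs_le.1 (abs_expIntegral_le hx)
  rw [hdecomp, one_div, Real.log_inv, abs_le]
  constructor <;> linarith [hE.1, hE.2]
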